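/- (Transformation law (2.2) of R_n in the realization (3.8), classical part of Theorem 3.1.) Let ξ be a smooth vector field with admissible components ξ^μ, let h_{ρ|ν1…νn} be a family of admissible functions, and let (q_ε) be a variation of loops along ξ. Then the function ε ↦ R_n^{ρ|ν1…νn}(h)[q_ε] is differentiable at ε = 0 and (d/dε)|_{ε=0} R_n^{ρ|ν1…νn}(h)[q_ε] = R_n^{ρ|ν1…νn}( ξ^μ ∂_μ h_{ρ|ν1…νn} + (∂_ρ ξ^μ) h_{μ|ν1…νn} + ∑_{j=1}^{n} (∂_{νj} ξ^μ) h_{ρ|ν1…μ…νn} )[q_0] − (n+1) R_{n+1}^{ρ|μν1…νn}( (∂_μ ξ^0) h_{ρ|ν1…νn} )[q_0] − R_{n+1}^{ρ|μν1…νn}( (∂_ρ ξ^0) h_{μ|ν1…νn} )[q_0] + S_{n+2}^{ρσν1…νn}( (∂_ρ ∂_σ ξ^μ) h_{μ|ν1…νn} )[q_0] − S_{n+3}^{ρσμν1…νn}( (∂_ρ ∂_σ ξ^0) h_{μ|ν1…νn} )[q_0]. -/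

import Mathlib

open Finset Real

/-- Partial derivative `∂_μ f` of a function on `ℝ^N = (Fin N → ℝ)`. -/
noncomputable def pd {N : ℕ} (f : (Fin N → ℝ) → ℝ) (μ : Fin N) (x : Fin N → ℝ) : ℝ :=
  fderiv ℝ f x (Pi.single μ 1)

/-- Second partial derivative `∂_μ ∂_ν f`. -/
noncomputable def pd2 {N : ℕ} (f : (Fin N → ℝ) → ℝ) (μ ν : Fin N) (x : Fin N → ℝ) : ℝ :=
  pd (fun y => pd f ν y) μ x

/-- A function on `ℝ^N` is admissible if it is smooth and `2π`-periodic in `x^0`. -/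
def Admissible {N : ℕ} [NeZero N] (f : (Fin N → ℝ) → ℝ) : Prop :=
  ContDiff ℝ (⊤ : ℕ∞) f ∧ ∀ x, f (x + Pi.single 0 (2 * π)) = f x

/-- A loop is a smooth map `q : ℝ → ℝ^N` with `q^0(t) = t` and each spatial
component `2π`-periodic. -/
def IsLoop {N : ℕ} [NeZero N] (q : ℝ → Fin N → ℝ) : Prop :=
  ContDiff ℝ (⊤ : ℕ∞) q ∧ (∀ t, q t 0 = t) ∧ ∀ t, ∀ i ≠ (0 : Fin N), q (t + 2 * π) i = q t i

/-- A variation of loops along the vector field `ξ`: a jointly smooth family of loops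
`q_ε` with `∂_ε q_ε^μ(t)|_{ε=0} = ξ^μ(q₀(t)) − q̇₀^μ(t) ξ^0(q₀(t))`. -/
def IsVariation {N : ℕ} [NeZero N] (ξ : Fin N → (Fin N → ℝ) → ℝ)
    (Q : ℝ → ℝ → Fin N → ℝ) : Prop :=
  (∀ ε, IsLoop (Q ε)) ∧ ContDiff ℝ (⊤ : ℕ∞) (fun p : ℝ × ℝ => Q p.1 p.2) ∧
    ∀ t μ, deriv (fun ε => Q ε t μ) 0
      = ξ μ (Q 0 t) - deriv (fun s => Q 0 s μ) t * ξ 0 (Q 0 t)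

/-- `S_n^{ν₁…νₙ}(g)[q] = (1/2πi) ∫₀^{2π} q̇^{ν₁}⋯q̇^{νₙ} g_{ν₁…νₙ}(q(t)) dt`,
summed over all the indices. -/
noncomputable def Sop {N : ℕ} (n : ℕ) (g : (Fin n → Fin N) → (Fin N → ℝ) → ℝ)
    (q : ℝ → Fin N → ℝ) : ℂ :=
  (1 / (2 * π * Complex.I)) *
    ((∫ t in (0:ℝ)..(2 * π), ∑ ν : Fin n → Fin N,
        (∏ l, deriv (fun s => q s (ν l)) t) * g ν (q t) : ℝ) : ℂ)

/-- `R_n^{ρ|ν₁…νₙ}(h)[q] = (1/2πi) ∫₀^{2π} q̈^ρ q̇^{ν₁}⋯q̇^{νₙ} h_{ρ|ν₁…νₙ}(q(t)) dt`,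
summed over all the indices. -/
noncomputable def Rop {N : ℕ} (n : ℕ) (h : Fin N → (Fin n → Fin N) → (Fin N → ℝ) → ℝ)
    (q : ℝ → Fin N → ℝ) : ℂ :=
  (1 / (2 * π * Complex.I)) *
    ((∫ t in (0:ℝ)..(2 * π), ∑ ρ, ∑ ν : Fin n → Fin N,
        deriv (deriv (fun s => q s ρ)) t *
          (∏ l, deriv (fun s => q s (ν l)) t) * h ρ ν (q t) : ℝ) : ℂ)

open scoped ContDiff

/-- The contraction `a^ρ u^{ν₁}⋯u^{νₙ} h_{ρ|ν₁…νₙ}(x)`. -/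
noncomputable def rContr {N n : ℕ} (h : Fin N → (Fin n → Fin N) → (Fin N → ℝ) → ℝ)
    (a u x : Fin N → ℝ) : ℝ :=
  ∑ ρ, ∑ ν : Fin n → Fin N, a ρ * (∏ l, u (ν l)) * h ρ ν x

/-- The contraction `u^{ν₁}⋯u^{νₙ} g_{ν₁…νₙ}(x)`. -/
noncomputable def sContr {N n : ℕ} (g : (Fin n → Fin N) → (Fin N → ℝ) → ℝ)
    (u x : Fin N → ℝ) : ℝ :=
  ∑ ν : Fin n → Fin N, (∏ l, u (ν l)) * g ν x

/-- The derivative of `rContr h` at `(a, u, x)` in the direction `(a', u', x')`. -/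
noncomputable def rContrDeriv {N n : ℕ} (h : Fin N → (Fin n → Fin N) → (Fin N → ℝ) → ℝ)
    (a u x a' u' x' : Fin N → ℝ) : ℝ :=
  ∑ ρ, ∑ ν : Fin n → Fin N,
    ((a' ρ * (∏ l, u (ν l)) + a ρ * ∑ j, (∏ l ∈ univ.erase j, u (ν l)) * u' (ν j)) * h ρ ν x
      + a ρ * (∏ l, u (ν l)) * ∑ μ, x' μ * pd (h ρ ν) μ x)

theorem hasDerivAt_comp_curve {N : ℕ} {f : (Fin N → ℝ) → ℝ} {q : ℝ → Fin N → ℝ}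
    {q' : Fin N → ℝ} {t : ℝ} (hf : DifferentiableAt ℝ f (q t))
    (hq : ∀ μ, HasDerivAt (fun s => q s μ) (q' μ) t) :
    HasDerivAt (fun s => f (q s)) (∑ μ, q' μ * pd f μ (q t)) t := by
  have hq' : HasDerivAt q q' t := hasDerivAt_pi.2 hq
  convert! hf.hasFDerivAt.comp_hasDerivAt t hq' using 1
  conv_rhs => rw [pi_eq_sum_univ' q', map_sum]
  refine sum_congr rfl fun μ _ => ?_
  rw [map_smul, smul_eq_mul, pd]

theorem hasDerivAt_rContr {N n : ℕ} {h : Fin N → (Fin n → Fin N) → (Fin N → ℝ) → ℝ}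
    (hh : ∀ ρ ν, Differentiable ℝ (h ρ ν)) {a u q : ℝ → Fin N → ℝ} {a' u' q' : Fin N → ℝ} {t : ℝ}
    (ha : ∀ μ, HasDerivAt (fun s => a s μ) (a' μ) t)
    (hu : ∀ μ, HasDerivAt (fun s => u s μ) (u' μ) t)
    (hq : ∀ μ, HasDerivAt (fun s => q s μ) (q' μ) t) :
    HasDerivAt (fun s => rContr h (a s) (u s) (q s))
      (rContrDeriv h (a t) (u t) (q t) a' u' q') t := by
  refine HasDerivAt.fun_sum fun ρ _ => HasDerivAt.fun_sum fun ν _ => ?_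
  have hp := HasDerivAt.fun_finsetProd (u := univ) fun l _ => hu (ν l)
  exact ((ha ρ).mul hp).mul (hasDerivAt_comp_curve (hh ρ ν _) hq)

theorem sum_pi_succ {α : Type*} [Fintype α] {n : ℕ} (f : (Fin (n + 1) → α) → ℝ) :
    ∑ κ, f κ = ∑ μ, ∑ ν : Fin n → α, f (Fin.cons μ ν) := by
  rw [← Fintype.sum_prod_type', ← (Fin.consEquiv fun _ => α).sum_comp]
  rfl

theorem rContr_succ {N n : ℕ} (h : Fin N → (Fin (n + 1) → Fin N) → (Fin N → ℝ) → ℝ)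
    (a u x : Fin N → ℝ) :
    rContr h a u x = ∑ ρ, ∑ σ, ∑ ν : Fin n → Fin N,
      a ρ * (u σ * ∏ l, u (ν l)) * h ρ (Fin.cons σ ν) x := by
  simp only [rContr, sum_pi_succ, Fin.prod_univ_succ, Fin.cons_zero, Fin.cons_succ]

theorem sum_update_comm {α : Type*} [Fintype α] {n : ℕ} (j : Fin n) (f : α → (Fin n → α) → ℝ) :
    ∑ ν : Fin n → α, ∑ μ, f (ν j) (Function.update ν j μ) = ∑ ν : Fin n → α, ∑ σ, f σ ν := by
  let e : (Fin n → α) × α ≃ (Fin n → α) × α :=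
    Function.Involutive.toPerm (fun p => (Function.update p.1 j p.2, p.1 j))
      fun p => by simp
  rw [← Fintype.sum_prod_type', ← Fintype.sum_prod_type' (f := fun ν σ => f σ ν),
    ← e.sum_comp fun p => f p.2 p.1]
  rfl

theorem sum_prod_update {N n : ℕ} (u : Fin N → ℝ) (c : Fin N → Fin N → ℝ)
    (h : (Fin n → Fin N) → ℝ) :
    ∑ ν : Fin n → Fin N, (∏ l, u (ν l)) * ∑ j, ∑ μ, c μ (ν j) * h (Function.update ν j μ)
      = ∑ ν : Fin n → Fin N,
          (∑ j, (∏ l ∈ univ.erase j, u (ν l)) * ∑ σ, u σ * c (ν j) σ) * h ν := by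
  simp only [mul_sum, sum_mul]
  rw [sum_comm]
  conv_rhs => rw [sum_comm]
  refine sum_congr rfl fun j _ => ?_
  rw [← sum_update_comm j fun σ ν =>
    (∏ l ∈ univ.erase j, u (ν l)) * (u σ * c (ν j) σ) * h ν]
  refine sum_congr rfl fun ν _ => sum_congr rfl fun μ _ => ?_
  rw [← mul_prod_erase univ (fun l => u (ν l)) (mem_univ j), Function.update_self]
  have : ∏ l ∈ univ.erase j, u (Function.update ν j μ l) = ∏ l ∈ univ.erase j, u (ν l) :=
    prod_congr rfl fun l hl => by rw [Function.update_of_ne (ne_of_mem_erase hl)]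
  rw [this]
  ring

theorem rContrDeriv_sub_smul {N n : ℕ} (h : Fin N → (Fin n → Fin N) → (Fin N → ℝ) → ℝ)
    (a u x A B U V X Y : Fin N → ℝ) (c : ℝ) :
    rContrDeriv h a u x (fun μ => A μ - c * B μ) (fun μ => U μ - c * V μ) (fun μ => X μ - c * Y μ)
      = rContrDeriv h a u x A U X - c * rContrDeriv h a u x B V Y := by
  simp only [rContrDeriv, mul_sum, ← sum_sub_distrib]
  refine sum_congr rfl fun ρ _ => sum_congr rfl fun ν _ => ?_
  simp only [sub_mul, mul_sub, sum_sub_distrib, mul_add, add_mul, sum_mul, mul_sum,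
    mul_assoc, mul_left_comm _ c]
  ring

theorem rContrDeriv_const_left {N n : ℕ} (h : Fin N → (Fin n → Fin N) → (Fin N → ℝ) → ℝ)
    (a u x a' : Fin N → ℝ) :
    rContrDeriv h a u x a' 0 0 = rContr h a' u x := by
  simp [rContrDeriv, rContr]

theorem rContrDeriv_euler {N n : ℕ} (h : Fin N → (Fin n → Fin N) → (Fin N → ℝ) → ℝ)
    (a u x : Fin N → ℝ) :
    rContrDeriv h a u x (fun μ => 2 * a μ) u 0 = (n + 2) * rContr h a u x := by
  simp only [rContrDeriv, rContr, mul_sum]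
  refine sum_congr rfl fun ρ _ => sum_congr rfl fun ν _ => ?_
  have : ∀ j, (∏ l ∈ univ.erase j, u (ν l)) * u (ν j) = ∏ l, u (ν l) := fun j =>
    prod_erase_mul univ (fun l => u (ν l)) (mem_univ j)
  simp [this]
  ring

/-- Second derivative along a curve with velocity `u` and acceleration `a` at `x`. -/
noncomputable def secondAlong {N : ℕ} (f : (Fin N → ℝ) → ℝ) (a u x : Fin N → ℝ) : ℝ :=
  (∑ σ, a σ * pd f σ x) + ∑ σ, ∑ τ, u σ * u τ * pd2 f σ τ x

theorem rContrDeriv_lie {N n : ℕ} (ξ : Fin N → (Fin N → ℝ) → ℝ)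
    (h : Fin N → (Fin n → Fin N) → (Fin N → ℝ) → ℝ) (a u x : Fin N → ℝ) :
    rContrDeriv h a u x (fun μ => secondAlong (ξ μ) a u x) (fun μ => ∑ σ, u σ * pd (ξ μ) σ x)
        (fun μ => ξ μ x)
      = rContr (fun ρ ν x =>
          (∑ μ, ξ μ x * pd (h ρ ν) μ x)
            + (∑ μ, pd (ξ μ) ρ x * h μ ν x)
            + ∑ j, ∑ μ, pd (ξ μ) (ν j) x * h ρ (Function.update ν j μ) x) a u x
        + sContr (n := n + 2) (fun κ x =>
              ∑ μ, pd2 (ξ μ) (κ 0) (κ 1) x * h μ (fun l => κ l.succ.succ) x) u x := by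
  have h1 : ∑ ρ, ∑ ν : Fin n → Fin N, a ρ * (∏ l, u (ν l)) * ∑ μ, pd (ξ μ) ρ x * h μ ν x
      = ∑ ρ, ∑ ν : Fin n → Fin N, (∑ σ, a σ * pd (ξ ρ) σ x) * (∏ l, u (ν l)) * h ρ ν x := by
    simp only [mul_sum, sum_mul]
    rw [sum_comm]
    conv_rhs => rw [sum_comm]
    refine sum_congr rfl fun ν _ => ?_
    rw [sum_comm]
    exact sum_congr rfl fun _ _ => sum_congr rfl fun _ _ => by ring
  have h2 : ∀ ρ, ∑ ν : Fin n → Fin N, a ρ * (∏ l, u (ν l)) *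
        ∑ j, ∑ μ, pd (ξ μ) (ν j) x * h ρ (Function.update ν j μ) x
      = ∑ ν : Fin n → Fin N, a ρ * (∑ j, (∏ l ∈ univ.erase j, u (ν l)) *
          ∑ σ, u σ * pd (ξ (ν j)) σ x) * h ρ ν x := by
    intro ρ
    simp only [mul_assoc (a ρ), ← mul_sum]
    rw [sum_prod_update u (fun μ σ => pd (ξ μ) σ x) fun ν => h ρ ν x]
  have h3 : sContr (n := n + 2) (fun κ x =>
        ∑ μ, pd2 (ξ μ) (κ 0) (κ 1) x * h μ (fun l => κ l.succ.succ) x) u x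
      = ∑ ρ, ∑ ν : Fin n → Fin N,
        (∑ σ, ∑ τ, u σ * u τ * pd2 (ξ ρ) σ τ x) * (∏ l, u (ν l)) * h ρ ν x := by
    simp only [sContr, sum_pi_succ, Fin.prod_univ_succ, Fin.cons_zero, Fin.cons_succ, Fin.cons_one,
      mul_sum, sum_mul]
    calc _ = ∑ σ, ∑ τ, ∑ ρ, ∑ ν : Fin n → Fin N,
          u σ * u τ * pd2 (ξ ρ) σ τ x * (∏ l, u (ν l)) * h ρ ν x := by
          refine sum_congr rfl fun σ _ => sum_congr rfl fun τ _ => ?_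
          rw [sum_comm]
          exact sum_congr rfl fun _ _ => sum_congr rfl fun _ _ => by ring
      _ = _ := by
          rw [sum_congr rfl fun σ _ => sum_comm, sum_comm]
          refine sum_congr rfl fun ρ _ => ?_
          rw [sum_congr rfl fun σ _ => sum_comm, sum_comm]
  simp only [rContr, mul_add, sum_add_distrib, h1, h2, h3]
  simp only [rContrDeriv, secondAlong, add_mul, sum_add_distrib]
  ring

theorem rContr_firstDeriv {N n : ℕ} (f : (Fin N → ℝ) → ℝ)
    (h : Fin N → (Fin n → Fin N) → (Fin N → ℝ) → ℝ) (a u x : Fin N → ℝ) :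
    rContr (n := n + 1) (fun ρ κ x => pd f (κ 0) x * h ρ (fun l => κ l.succ) x) a u x
      = (∑ σ, u σ * pd f σ x) * rContr h a u x := by
  rw [rContr_succ, rContr, mul_sum]
  refine sum_congr rfl fun ρ _ => ?_
  simp only [sum_mul_sum, Fin.cons_zero, Fin.cons_succ]
  exact sum_congr rfl fun _ _ => sum_congr rfl fun _ _ => by ring

theorem secondAlong_mul_rContr {N n : ℕ} (f : (Fin N → ℝ) → ℝ)
    (h : Fin N → (Fin n → Fin N) → (Fin N → ℝ) → ℝ) (a u x : Fin N → ℝ) :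
    secondAlong f a u x * rContr h u u x
      = rContr (n := n + 1) (fun ρ κ x => pd f ρ x * h (κ 0) (fun l => κ l.succ) x) a u x
        + sContr (n := n + 3) (fun κ x =>
            pd2 f (κ 0) (κ 1) x * h (κ 2) (fun l => κ l.succ.succ.succ) x) u x := by
  rw [secondAlong, add_mul]
  congr 1
  · rw [rContr_succ, rContr, sum_mul]
    refine sum_congr rfl fun ρ _ => ?_
    simp only [mul_sum, Fin.cons_zero, Fin.cons_succ]
    exact sum_congr rfl fun _ _ => sum_congr rfl fun _ _ => by ring
  · have h2 : ∀ (σ τ μ : Fin N) (ν : Fin n → Fin N),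
        (Fin.cons σ (Fin.cons τ (Fin.cons μ ν)) : Fin (n + 3) → Fin N) 2 = μ :=
      fun _ _ _ _ => rfl
    simp only [sContr, sum_pi_succ, Fin.prod_univ_succ, Fin.cons_zero, Fin.cons_succ, Fin.cons_one,
      rContr, sum_mul, h2]
    refine sum_congr rfl fun σ _ => sum_congr rfl fun τ _ => ?_
    simp only [mul_sum]
    exact sum_congr rfl fun _ _ => sum_congr rfl fun _ _ => by ring

/-- The variation of the integrand of `R_n` equals the integrand of the transformation law up to
the total derivative of `ξ^0` times the integrand; here `b` stands for the third derivative of the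
loop. -/
theorem rContrDeriv_variation {N : ℕ} [NeZero N] {n : ℕ} (ξ : Fin N → (Fin N → ℝ) → ℝ)
    (h : Fin N → (Fin n → Fin N) → (Fin N → ℝ) → ℝ) (a b u x : Fin N → ℝ) :
    rContrDeriv h a u x
        (fun μ => secondAlong (ξ μ) a u x - ((b μ * ξ 0 x + a μ * ∑ σ, u σ * pd (ξ 0) σ x)
          + (a μ * (∑ σ, u σ * pd (ξ 0) σ x) + u μ * secondAlong (ξ 0) a u x)))
        (fun μ => (∑ σ, u σ * pd (ξ μ) σ x) - (a μ * ξ 0 x + u μ * ∑ σ, u σ * pd (ξ 0) σ x))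
        (fun μ => ξ μ x - u μ * ξ 0 x)
      = rContr (fun ρ ν x =>
          (∑ μ, ξ μ x * pd (h ρ ν) μ x)
            + (∑ μ, pd (ξ μ) ρ x * h μ ν x)
            + ∑ j, ∑ μ, pd (ξ μ) (ν j) x * h ρ (Function.update ν j μ) x) a u x
        - (n + 1) * rContr (n := n + 1) (fun ρ κ x =>
              pd (ξ 0) (κ 0) x * h ρ (fun l => κ l.succ) x) a u x
        - rContr (n := n + 1) (fun ρ κ x =>
              pd (ξ 0) ρ x * h (κ 0) (fun l => κ l.succ) x) a u x
        + sContr (n := n + 2) (fun κ x =>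
              ∑ μ, pd2 (ξ μ) (κ 0) (κ 1) x * h μ (fun l => κ l.succ.succ) x) u x
        - sContr (n := n + 3) (fun κ x =>
              pd2 (ξ 0) (κ 0) (κ 1) x * h (κ 2) (fun l => κ l.succ.succ.succ) x) u x
        - ((∑ σ, u σ * pd (ξ 0) σ x) * rContr h a u x
            + ξ 0 x * rContrDeriv h a u x b a u) := by
  have e1 := rContrDeriv_lie ξ h a u x
  have e2 := secondAlong_mul_rContr (ξ 0) h a u x
  rw [rContr_firstDeriv]
  set d := ∑ σ, u σ * pd (ξ 0) σ x
  have e3 := rContrDeriv_sub_smul h a u x (fun μ => secondAlong (ξ μ) a u x) b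
    (fun μ => ∑ σ, u σ * pd (ξ μ) σ x) a (fun μ => ξ μ x) u (ξ 0 x)
  have e4 := rContrDeriv_sub_smul h a u x (fun μ => secondAlong (ξ μ) a u x - ξ 0 x * b μ)
    (fun μ => 2 * a μ) (fun μ => (∑ σ, u σ * pd (ξ μ) σ x) - ξ 0 x * a μ) u
    (fun μ => ξ μ x - ξ 0 x * u μ) 0 d
  have e5 := rContrDeriv_sub_smul h a u x
    (fun μ => secondAlong (ξ μ) a u x - ξ 0 x * b μ - d * (2 * a μ)) u
    (fun μ => (∑ σ, u σ * pd (ξ μ) σ x) - ξ 0 x * a μ - d * u μ) 0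
    (fun μ => ξ μ x - ξ 0 x * u μ - d * (0 : Fin N → ℝ) μ) 0 (secondAlong (ξ 0) a u x)
  rw [e4, e3, e1, rContrDeriv_euler, rContrDeriv_const_left, e2] at e5
  refine Eq.trans ?_ (e5.trans ?_)
  · congr 1 <;> funext μ <;> (try simp only [Pi.zero_apply]) <;> ring
  · ring

theorem contDiff_fderiv_apply {E : Type*} [NormedAddCommGroup E] [NormedSpace ℝ E] {f : E → ℝ}
    (hf : ContDiff ℝ ∞ f) (v : E) : ContDiff ℝ ∞ fun x => fderiv ℝ f x v :=
  (hf.fderiv_right (m := ∞) (by simp)).clm_apply contDiff_const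

theorem contDiff_pd {N : ℕ} {f : (Fin N → ℝ) → ℝ} (hf : ContDiff ℝ ∞ f) (μ : Fin N) :
    ContDiff ℝ ∞ (pd f μ) :=
  contDiff_fderiv_apply hf _

theorem hasDerivAt_fst {G : ℝ × ℝ → ℝ} (hG : Differentiable ℝ G) (ε t : ℝ) :
    HasDerivAt (fun e => G (e, t)) (fderiv ℝ G (ε, t) (1, 0)) ε :=
  (hG (ε, t)).hasFDerivAt.comp_hasDerivAt ε ((hasDerivAt_id ε).prodMk (hasDerivAt_const ε t))

theorem hasDerivAt_snd {G : ℝ × ℝ → ℝ} (hG : Differentiable ℝ G) (ε t : ℝ) :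
    HasDerivAt (fun s => G (ε, s)) (fderiv ℝ G (ε, t) (0, 1)) t :=
  (hG (ε, t)).hasFDerivAt.comp_hasDerivAt t ((hasDerivAt_const t ε).prodMk (hasDerivAt_id t))

theorem fderiv_fderiv_comm {E : Type*} [NormedAddCommGroup E] [NormedSpace ℝ E] {f : E → ℝ}
    (hf : ContDiff ℝ ∞ f) (v w x : E) :
    fderiv ℝ (fun y => fderiv ℝ f y v) x w = fderiv ℝ (fun y => fderiv ℝ f y w) x v := by
  have hd : DifferentiableAt ℝ (fderiv ℝ f) x :=
    (hf.fderiv_right (m := ∞) (by simp)).differentiable (by simp) x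
  rw [fderiv_clm_apply hd (differentiableAt_const v), fderiv_clm_apply hd (differentiableAt_const w)]
  have h2 : minSmoothness ℝ 2 ≤ ∞ := by
    rw [minSmoothness_of_isRCLikeNormedField]
    exact WithTop.coe_le_coe.2 (le_top : (2 : ℕ∞) ≤ ⊤)
  simpa using (hf.contDiffAt.isSymmSndFDerivAt h2).eq w v

/-- Differentiation under the integral sign for a smooth function of two variables. -/
theorem hasDerivAt_intervalIntegral_of_contDiff {F : ℝ × ℝ → ℝ} (hF : ContDiff ℝ ∞ F)
    (a b x₀ : ℝ) :
    HasDerivAt (fun x => ∫ t in a..b, F (x, t))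
      (∫ t in a..b, fderiv ℝ F (x₀, t) (1, 0)) x₀ := by
  have hF' := (contDiff_fderiv_apply hF (1, 0)).continuous
  obtain ⟨C, hC⟩ := ((isCompact_closedBall x₀ 1).prod (isCompact_uIcc (a := a) (b := b))
    ).exists_bound_of_continuousOn hF'.continuousOn
  refine (intervalIntegral.hasDerivAt_integral_of_dominated_loc_of_deriv_le
    (F := fun x t => F (x, t)) (F' := fun x t => fderiv ℝ F (x, t) (1, 0)) (bound := fun _ => C)
    (Metric.closedBall_mem_nhds x₀ one_pos) ?_ ?_ ?_ ?_ ?_ ?_).2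
  · exact .of_forall fun x => (hF.continuous.comp (by fun_prop)).aestronglyMeasurable
  · exact (hF.continuous.comp (by fun_prop)).intervalIntegrable _ _
  · exact (hF'.comp (by fun_prop)).aestronglyMeasurable
  · exact .of_forall fun t ht x hx => hC (x, t) ⟨hx, Set.uIoc_subset_uIcc ht⟩
  · exact intervalIntegrable_const
  · exact .of_forall fun t _ x _ => hasDerivAt_fst (hF.differentiable (by simp)) x t

theorem continuous_rContr {N n : ℕ} {h : Fin N → (Fin n → Fin N) → (Fin N → ℝ) → ℝ}
    (hh : ∀ ρ ν, Continuous (h ρ ν)) {a u q : ℝ → Fin N → ℝ}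
    (ha : Continuous a) (hu : Continuous u) (hq : Continuous q) :
    Continuous fun t => rContr h (a t) (u t) (q t) := by
  unfold rContr
  fun_prop

theorem continuous_sContr {N n : ℕ} {g : (Fin n → Fin N) → (Fin N → ℝ) → ℝ}
    (hg : ∀ ν, Continuous (g ν)) {u q : ℝ → Fin N → ℝ} (hu : Continuous u) (hq : Continuous q) :
    Continuous fun t => sContr g (u t) (q t) := by
  unfold sContr
  fun_prop

theorem hasDerivAt_secondAlong {N : ℕ} {f : (Fin N → ℝ) → ℝ} (hf : ContDiff ℝ ∞ f)
    {q u : ℝ → Fin N → ℝ} {a : Fin N → ℝ} {t : ℝ}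
    (hq : ∀ μ, HasDerivAt (fun s => q s μ) (u t μ) t)
    (hu : ∀ μ, HasDerivAt (fun s => u s μ) (a μ) t) :
    HasDerivAt (fun s => ∑ σ, u s σ * pd f σ (q s)) (secondAlong f a (u t) (q t)) t := by
  have := HasDerivAt.fun_sum (u := univ) fun σ _ => (hu σ).mul
    (hasDerivAt_comp_curve ((contDiff_pd hf σ).differentiable (by simp) (q t)) hq)
  refine this.congr_deriv ?_
  rw [sum_add_distrib, secondAlong]
  congr 1
  simp only [mul_sum]
  rw [sum_comm]
  exact sum_congr rfl fun σ _ => sum_congr rfl fun τ _ => by rw [pd2]; ring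

theorem IsLoop.shift {N : ℕ} [NeZero N] {q : ℝ → Fin N → ℝ} (hq : IsLoop q) (t : ℝ) :
    q (t + 2 * π) = q t + Pi.single 0 (2 * π) := by
  ext i
  by_cases hi : i = 0
  · subst hi
    simp [hq.2.1]
  · simp [hi, hq.2.2 t i hi]

theorem IsLoop.deriv_periodic {N : ℕ} [NeZero N] {q : ℝ → Fin N → ℝ} (hq : IsLoop q)
    (μ : Fin N) (t : ℝ) :
    deriv (fun s => q s μ) (t + 2 * π) = deriv (fun s => q s μ) t := by
  rw [← deriv_comp_add_const]
  simp [hq.shift]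

theorem IsLoop.deriv_deriv_periodic {N : ℕ} [NeZero N] {q : ℝ → Fin N → ℝ} (hq : IsLoop q)
    (μ : Fin N) (t : ℝ) :
    deriv (deriv fun s => q s μ) (t + 2 * π) = deriv (deriv fun s => q s μ) t := by
  rw [← deriv_comp_add_const]
  simp only [hq.deriv_periodic]

/-- Transformation law (2.2) of `R_n` in the realization (3.8): along a variation of
loops `q_ε` in the direction of `ξ`,
`(d/dε)|₀ R_n(h)[q_ε] = R_n(ξ^μ∂_μ h + (∂_ρ ξ^μ) h_{μ|…} + ∑_j ∂_{νⱼ}ξ^μ h_{ρ|…μ…})[q₀]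
  − (n+1) R_{n+1}((∂_μ ξ^0) h_{ρ|…})[q₀] − R_{n+1}((∂_ρ ξ^0) h_{μ|…})[q₀]
  + S_{n+2}((∂_ρ∂_σ ξ^μ) h_{μ|…})[q₀] − S_{n+3}((∂_ρ∂_σ ξ^0) h_{μ|…})[q₀]`. -/
theorem R_transformation_law (N : ℕ) [NeZero N] (n : ℕ)
    (ξ : Fin N → (Fin N → ℝ) → ℝ) (hξ : ∀ μ, Admissible (ξ μ))
    (h : Fin N → (Fin n → Fin N) → (Fin N → ℝ) → ℝ) (hh : ∀ ρ ν, Admissible (h ρ ν))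
    (Q : ℝ → ℝ → Fin N → ℝ) (hQ : IsVariation ξ Q) :
    HasDerivAt (fun ε => Rop n h (Q ε))
      (Rop n (fun ρ ν x =>
          (∑ μ, ξ μ x * pd (h ρ ν) μ x)
            + (∑ μ, pd (ξ μ) ρ x * h μ ν x)
            + ∑ j, ∑ μ, pd (ξ μ) (ν j) x * h ρ (Function.update ν j μ) x) (Q 0)
        - ((n : ℂ) + 1) *
            Rop (n + 1) (fun ρ κ x =>
              pd (ξ 0) (κ 0) x * h ρ (fun l => κ l.succ) x) (Q 0)
        - Rop (n + 1) (fun ρ κ x =>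
              pd (ξ 0) ρ x * h (κ 0) (fun l => κ l.succ) x) (Q 0)
        + Sop (n + 2) (fun κ x =>
              ∑ μ, pd2 (ξ μ) (κ 0) (κ 1) x * h μ (fun l => κ l.succ.succ) x) (Q 0)
        - Sop (n + 3) (fun κ x =>
              pd2 (ξ 0) (κ 0) (κ 1) x * h (κ 2) (fun l => κ l.succ.succ.succ) x) (Q 0))
      0 := by
  obtain ⟨hloop, hQs, hvar⟩ := hQ
  have hξs : ∀ μ, ContDiff ℝ ∞ (ξ μ) := fun μ => (hξ μ).1
  have hhs : ∀ ρ ν, ContDiff ℝ ∞ (h ρ ν) := fun ρ ν => (hh ρ ν).1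
  -- the loop family and its first two `t`-derivatives as functions of `(ε, t)`
  let G : Fin N → ℝ × ℝ → ℝ := fun μ p => Q p.1 p.2 μ
  let U : Fin N → ℝ × ℝ → ℝ := fun μ p => fderiv ℝ (G μ) p (0, 1)
  let A : Fin N → ℝ × ℝ → ℝ := fun μ p => fderiv ℝ (U μ) p (0, 1)
  let B : Fin N → ℝ × ℝ → ℝ := fun μ p => fderiv ℝ (A μ) p (0, 1)
  have hG : ∀ μ, ContDiff ℝ ∞ (G μ) := fun μ => contDiff_pi.1 hQs μ
  have hU : ∀ μ, ContDiff ℝ ∞ (U μ) := fun μ => contDiff_fderiv_apply (hG μ) _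
  have hA : ∀ μ, ContDiff ℝ ∞ (A μ) := fun μ => contDiff_fderiv_apply (hU μ) _
  have hB : ∀ μ, ContDiff ℝ ∞ (B μ) := fun μ => contDiff_fderiv_apply (hA μ) _
  have dG : ∀ μ, Differentiable ℝ (G μ) := fun μ => (hG μ).differentiable (by simp)
  have dU : ∀ μ, Differentiable ℝ (U μ) := fun μ => (hU μ).differentiable (by simp)
  have dA : ∀ μ, Differentiable ℝ (A μ) := fun μ => (hA μ).differentiable (by simp)
  have hderiv : ∀ ε μ, deriv (fun s => Q ε s μ) = fun t => U μ (ε, t) := fun ε μ =>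
    funext fun t => (hasDerivAt_snd (dG μ) ε t).deriv
  have hderiv2 : ∀ ε μ, deriv (fun t => U μ (ε, t)) = fun t => A μ (ε, t) := fun ε μ =>
    funext fun t => (hasDerivAt_snd (dU μ) ε t).deriv
  have hR : ∀ (m : ℕ) (k : Fin N → (Fin m → Fin N) → (Fin N → ℝ) → ℝ) (ε : ℝ),
      Rop m k (Q ε) = (1 / (2 * π * Complex.I)) * ((∫ t in (0:ℝ)..(2 * π),
        rContr k (fun μ => A μ (ε, t)) (fun μ => U μ (ε, t)) (Q ε t) : ℝ) : ℂ) := by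
    intro m k ε
    simp only [Rop, hderiv, hderiv2, rContr]
  have hS : ∀ (m : ℕ) (g : (Fin m → Fin N) → (Fin N → ℝ) → ℝ) (ε : ℝ),
      Sop m g (Q ε) = (1 / (2 * π * Complex.I)) * ((∫ t in (0:ℝ)..(2 * π),
        sContr g (fun μ => U μ (ε, t)) (Q ε t) : ℝ) : ℂ) := by
    intro m g ε
    simp only [Sop, hderiv, sContr]
  let F : ℝ × ℝ → ℝ := fun p => rContr h (fun μ => A μ p) (fun μ => U μ p) (Q p.1 p.2)
  have hF : ContDiff ℝ ∞ F := by
    refine ContDiff.sum fun ρ _ => ContDiff.sum fun ν _ => ?_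
    exact ((hA ρ).mul (contDiff_prod fun l _ => hU (ν l))).mul ((hhs ρ ν).comp hQs)
  have hint := hasDerivAt_intervalIntegral_of_contDiff hF 0 (2 * π) 0
  let q : ℝ → Fin N → ℝ := Q 0
  let u : ℝ → Fin N → ℝ := fun t μ => U μ (0, t)
  let a : ℝ → Fin N → ℝ := fun t μ => A μ (0, t)
  let b : ℝ → Fin N → ℝ := fun t μ => B μ (0, t)
  have hqu : ∀ t μ, HasDerivAt (fun s => q s μ) (u t μ) t := fun t μ => hasDerivAt_snd (dG μ) 0 t
  have hua : ∀ t μ, HasDerivAt (fun s => u s μ) (a t μ) t := fun t μ => hasDerivAt_snd (dU μ) 0 t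
  have hab : ∀ t μ, HasDerivAt (fun s => a s μ) (b t μ) t := fun t μ => hasDerivAt_snd (dA μ) 0 t
  have cq : Continuous q := (hloop 0).1.continuous
  have cu : Continuous u := continuous_pi fun μ => (hU μ).continuous.comp (by fun_prop)
  have ca : Continuous a := continuous_pi fun μ => (hA μ).continuous.comp (by fun_prop)
  have cb : Continuous b := continuous_pi fun μ => (hB μ).continuous.comp (by fun_prop)
  have hhd : ∀ ρ ν, Differentiable ℝ (h ρ ν) := fun ρ ν => (hhs ρ ν).differentiable (by simp)
  have hξq : ∀ t μ, HasDerivAt (fun s => ξ μ (q s)) (∑ σ, u t σ * pd (ξ μ) σ (q t)) t := fun t μ =>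
    hasDerivAt_comp_curve ((hξs μ).differentiable (by simp) _) (hqu t)
  have hξq2 : ∀ t μ, HasDerivAt (fun s => ∑ σ, u s σ * pd (ξ μ) σ (q s))
      (secondAlong (ξ μ) (a t) (u t) (q t)) t := fun t μ =>
    hasDerivAt_secondAlong (hξs μ) (hqu t) (hua t)
  -- `ε`-derivatives at `0` of the loop, its velocity and its acceleration
  have vG : ∀ t μ, fderiv ℝ (G μ) (0, t) (1, 0) = ξ μ (q t) - u t μ * ξ 0 (q t) := by
    intro t μ
    rw [← (hasDerivAt_fst (dG μ) 0 t).deriv]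
    exact (hvar t μ).trans (by rw [hderiv])
  have vU : ∀ t μ, fderiv ℝ (U μ) (0, t) (1, 0) = (∑ σ, u t σ * pd (ξ μ) σ (q t))
      - (a t μ * ξ 0 (q t) + u t μ * ∑ σ, u t σ * pd (ξ 0) σ (q t)) := by
    intro t μ
    rw [fderiv_fderiv_comm (hG μ)]
    refine (hasDerivAt_snd ((contDiff_fderiv_apply (hG μ) (1, 0)).differentiable
      (by simp)) 0 t).unique ?_
    simp only [vG]
    exact (hξq t μ).sub ((hua t μ).mul (hξq t 0))
  have vA : ∀ t μ, fderiv ℝ (A μ) (0, t) (1, 0) = secondAlong (ξ μ) (a t) (u t) (q t)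
      - ((b t μ * ξ 0 (q t) + a t μ * ∑ σ, u t σ * pd (ξ 0) σ (q t))
        + (a t μ * (∑ σ, u t σ * pd (ξ 0) σ (q t))
          + u t μ * secondAlong (ξ 0) (a t) (u t) (q t))) := by
    intro t μ
    rw [fderiv_fderiv_comm (hU μ)]
    refine (hasDerivAt_snd ((contDiff_fderiv_apply (hU μ) (1, 0)).differentiable
      (by simp)) 0 t).unique ?_
    simp only [vU]
    exact (hξq2 t μ).sub (((hab t μ).mul (hξq t 0)).add ((hua t μ).mul (hξq2 t 0)))
  have vF : ∀ t, fderiv ℝ F (0, t) (1, 0) = rContrDeriv h (a t) (u t) (q t)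
      (fun μ => fderiv ℝ (A μ) (0, t) (1, 0)) (fun μ => fderiv ℝ (U μ) (0, t) (1, 0))
      (fun μ => fderiv ℝ (G μ) (0, t) (1, 0)) := fun t =>
    (hasDerivAt_fst (hF.differentiable (by simp)) 0 t).unique
      (hasDerivAt_rContr hhd (fun μ => hasDerivAt_fst (dA μ) 0 t)
        (fun μ => hasDerivAt_fst (dU μ) 0 t) fun μ => hasDerivAt_fst (dG μ) 0 t)
  simp only [vA, vU, vG, rContrDeriv_variation] at vF
  -- the total derivative integrates to zero by periodicity
  have hK : ∀ t, HasDerivAt (fun s => ξ 0 (q s) * rContr h (a s) (u s) (q s))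
      ((∑ σ, u t σ * pd (ξ 0) σ (q t)) * rContr h (a t) (u t) (q t)
        + ξ 0 (q t) * rContrDeriv h (a t) (u t) (q t) (b t) (a t) (u t)) t := fun t =>
    (hξq t 0).mul (hasDerivAt_rContr hhd (hab t) (hua t) (hqu t))
  have cξ : ∀ μ, Continuous (ξ μ) := fun μ => (hξs μ).continuous
  have ch : ∀ ρ ν, Continuous (h ρ ν) := fun ρ ν => (hhs ρ ν).continuous
  have cpξ : ∀ μ ν, Continuous (pd (ξ μ) ν) := fun μ ν => (contDiff_pd (hξs μ) ν).continuous
  have cph : ∀ ρ ν μ, Continuous (pd (h ρ ν) μ) := fun ρ ν μ =>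
    (contDiff_pd (hhs ρ ν) μ).continuous
  have cppξ : ∀ μ ν σ, Continuous (pd2 (ξ μ) ν σ) := fun μ ν σ =>
    (contDiff_pd (contDiff_pd (hξs μ) σ) ν).continuous
  have cK : Continuous fun t => (∑ σ, u t σ * pd (ξ 0) σ (q t)) * rContr h (a t) (u t) (q t)
        + ξ 0 (q t) * rContrDeriv h (a t) (u t) (q t) (b t) (a t) (u t) := by
    have := continuous_rContr ch ca cu cq
    unfold rContrDeriv
    fun_prop
  have hK0 := intervalIntegral.integral_eq_sub_of_hasDerivAt (fun t _ => hK t)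
    (cK.intervalIntegrable 0 (2 * π))
  have hq0 : q (2 * π) = q 0 + Pi.single 0 (2 * π) := by simpa using (hloop 0).shift 0
  have hu0 : u (2 * π) = u 0 := funext fun μ => by
    simpa [hderiv] using (hloop 0).deriv_periodic μ 0
  have ha0 : a (2 * π) = a 0 := funext fun μ => by
    simpa [hderiv, hderiv2] using (hloop 0).deriv_deriv_periodic μ 0
  have hrq : rContr h (a 0) (u 0) (q 0 + Pi.single 0 (2 * π)) = rContr h (a 0) (u 0) (q 0) := by
    simp only [rContr, (hh _ _).2]
  rw [hq0, hu0, ha0, hrq, (hξ 0).2, sub_self] at hK0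
  simp only [vF] at hint
  have hmain := (hint.ofReal_comp).const_mul (1 / (2 * π * Complex.I))
  simp only [hR, hS]
  refine hmain.congr_deriv ?_
  have i1 := (continuous_rContr (h := fun ρ ν x =>
          (∑ μ, ξ μ x * pd (h ρ ν) μ x)
            + (∑ μ, pd (ξ μ) ρ x * h μ ν x)
            + ∑ j, ∑ μ, pd (ξ μ) (ν j) x * h ρ (Function.update ν j μ) x)
    (by fun_prop) ca cu cq).intervalIntegrable (μ := MeasureTheory.volume) 0 (2 * π)
  have i2 := (continuous_rContr (n := n + 1) (h := fun ρ κ x =>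
              pd (ξ 0) (κ 0) x * h ρ (fun l => κ l.succ) x)
    (by fun_prop) ca cu cq).intervalIntegrable (μ := MeasureTheory.volume) 0 (2 * π)
  have i3 := (continuous_rContr (n := n + 1) (h := fun ρ κ x =>
              pd (ξ 0) ρ x * h (κ 0) (fun l => κ l.succ) x)
    (by fun_prop) ca cu cq).intervalIntegrable (μ := MeasureTheory.volume) 0 (2 * π)
  have i4 := (continuous_sContr (n := n + 2) (g := fun κ x =>
              ∑ μ, pd2 (ξ μ) (κ 0) (κ 1) x * h μ (fun l => κ l.succ.succ) x)
    (by fun_prop) cu cq).intervalIntegrable (μ := MeasureTheory.volume) 0 (2 * π)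
  have i5 := (continuous_sContr (n := n + 3) (g := fun κ x =>
              pd2 (ξ 0) (κ 0) (κ 1) x * h (κ 2) (fun l => κ l.succ.succ.succ) x)
    (by fun_prop) cu cq).intervalIntegrable (μ := MeasureTheory.volume) 0 (2 * π)
  have i2' := i2.const_mul ((n : ℝ) + 1)
  rw [intervalIntegral.integral_sub ((((i1.sub i2').sub i3).add i4).sub i5)
      (cK.intervalIntegrable 0 (2 * π)), hK0,
    intervalIntegral.integral_sub (((i1.sub i2').sub i3).add i4) i5,
    intervalIntegral.integral_add ((i1.sub i2').sub i3) i4,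
    intervalIntegral.integral_sub (i1.sub i2') i3,
    intervalIntegral.integral_sub i1 i2', intervalIntegral.integral_const_mul]
  push_cast
  ring
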